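/- Let k be a field of characteristic ≠ 2 and (P, ⊥) a poset with an order-reversing involution. Suppose φ is a symplectically indecomposable symplectic representation of (P, ⊥) in a finite-dimensional symplectic space (V, ω) over k whose underlying linear representation is decomposable. Then there exists a finite-dimensional k-vector space W and an indecomposable linear representation ψ of P in W such that φ is isomorphic, as a symplectic representation, to the symplectification ψ⁻ on (W* × W, Ω). -/

import Mathlib

/-- The canonical symplectic form `Ω((ξ, x), (η, y)) = ξ(y) − η(x)` on `W* × W`. -/
noncomputable def OmegaForm (k W : Type*) [Field k] [AddCommGroup W] [Module k W] :
    LinearMap.BilinForm k (Module.Dual k W × W) :=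
  ((Module.dualPairing k W).compl₁₂
      (LinearMap.fst k (Module.Dual k W) W) (LinearMap.snd k (Module.Dual k W) W)) -
  ((Module.dualPairing k W).compl₁₂
      (LinearMap.fst k (Module.Dual k W) W) (LinearMap.snd k (Module.Dual k W) W)).flip

/-!
The endomorphisms of `φ` form an algebra on which taking adjoints with respect to `ω` is an
involution `⋆`, and by Fitting's lemma symplectic indecomposability makes every selfadjoint
endomorphism nilpotent or injective. For a nontrivial idempotent `e` this forces `e + e⋆ - 1` to be
nilpotent. Hence `t = (1 + e - e⋆) / 2`, which satisfies `t⋆ = 1 - t`, is idempotent modulo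
nilpotents, and it lifts to an idempotent `d` with `d⋆ = 1 - d`. The range `W` of `d` and its kernel
are complementary Lagrangian subspaces, so `ω` identifies `ker d` with `W*`. An idempotent
endomorphism `f` of `W` gives the selfadjoint idempotent `f + f⋆` of `V`, which must be `0` or `1`,
so `W` is indecomposable.
-/

section StarRing

variable {A : Type*} [Ring A] [StarRing A]

/- The Newton step `t ↦ 3t² - 2t³ = t²(1 + 2(1 - t))` for the equation `t² = t` commutes with
`t ↦ 1 - t`, so it preserves the condition `t⋆ = 1 - t`. -/
theorem exists_isIdempotentElem_star_eq_one_sub_of_isNilpotent {t : A} (ht : star t = 1 - t)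
    (hnil : IsNilpotent (t * (1 - t))) : ∃ d : A, IsIdempotentElem d ∧ star d = 1 - d := by
  obtain ⟨m, hm⟩ := hnil
  replace hm : (t * (1 - t)) ^ 2 ^ m = 0 := pow_eq_zero_of_le Nat.lt_two_pow_self.le hm
  induction m generalizing t with
  | zero =>
    refine ⟨t, ?_, ht⟩
    rw [pow_zero, pow_one, mul_sub, mul_one, sub_eq_zero] at hm
    exact hm.symm
  | succ m ih =>
    refine ih (t := t ^ 2 * (1 + 2 * (1 - t))) ?_ ?_
    · simp only [star_mul, star_add, star_sub, star_one, star_pow, star_ofNat, ht]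
      noncomm_ring
    · have hfactor : t ^ 2 * (1 + 2 * (1 - t)) * (1 - t ^ 2 * (1 + 2 * (1 - t))) =
          (t * (1 - t)) ^ 2 * ((1 + 2 * (1 - t)) * (1 + 2 * t)) := by
        noncomm_ring
      have hcomm : Commute ((t * (1 - t)) ^ 2) ((1 + 2 * (1 - t)) * (1 + 2 * t)) := by
        rw [commute_iff_eq]
        noncomm_ring
      rw [hfactor, hcomm.mul_pow, ← pow_mul, ← pow_succ', hm, zero_mul]

section Dichotomy

variable (hA : ∀ x : A, IsSelfAdjoint x → IsNilpotent x ∨ IsLeftRegular x)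
include hA

theorem isNilpotent_star_mul_self {e : A} (he : IsIdempotentElem e) (he1 : e ≠ 1) :
    IsNilpotent (star e * e) := by
  refine (hA _ (IsSelfAdjoint.star_mul_self e)).resolve_right fun hreg => he1 (hreg ?_)
  simp only [mul_assoc, he.eq, mul_one]

theorem isNilpotent_add_star_sub_one {e : A} (he : IsIdempotentElem e) (he0 : e ≠ 0)
    (he1 : e ≠ 1) : IsNilpotent (e + star e - 1) := by
  obtain ⟨m, hm⟩ := isNilpotent_star_mul_self hA he he1
  set h := e + star e - 1
  have hse := he.star.eq
  have hmul_e : h * e = star e * e := by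
    simp only [h, add_mul, sub_mul, he.eq, one_mul, add_sub_cancel_left]
  have hmul_star : h * star e = e * h := by
    simp only [h, add_mul, sub_mul, mul_add, mul_sub, he.eq, hse, one_mul, mul_one,
      add_sub_cancel_right, add_sub_cancel_left]
  have hsemi : SemiconjBy e (star e * e) (h ^ 2) := by
    rw [SemiconjBy, pow_two, mul_assoc h, hmul_e, ← mul_assoc h, hmul_star, mul_assoc e h, hmul_e]
  have hpow : (h ^ 2) ^ m * e = 0 := by
    rw [← (hsemi.pow_right m).eq, hm, mul_zero]
  have hself : IsSelfAdjoint h := (IsSelfAdjoint.add_star_self e).sub (.one A)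
  exact (hA h hself).resolve_right fun hreg =>
    he0 (((hreg.pow 2).pow m).mul_left_eq_zero_iff.mp hpow)

theorem exists_isIdempotentElem_star_eq_one_sub [Invertible (2 : A)] {e : A}
    (he : IsIdempotentElem e) (he0 : e ≠ 0) (he1 : e ≠ 1) :
    ∃ d : A, IsIdempotentElem d ∧ star d = 1 - d := by
  have hhalf (a : A) : Commute (⅟2 : A) a := (Commute.ofNat_left 2 a).invOf_left
  have hstar_half : star (⅟2 : A) = ⅟2 := (IsSelfAdjoint.ofNat 2).invOf
  have hsub : 1 - ⅟2 * (1 + (e - star e)) = ⅟2 * (1 - (e - star e)) := by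
    rw [mul_add, mul_one, ← sub_sub, one_sub_invOf_two, mul_one_sub]
  refine exists_isIdempotentElem_star_eq_one_sub_of_isNilpotent
    (t := ⅟2 * (1 + (e - star e))) ?_ ?_
  · rw [hsub, star_mul, hstar_half, star_add, star_sub, star_star, star_one, ← (hhalf _).eq]
    noncomm_ring
  · have hsq : ⅟2 * (1 + (e - star e)) * (⅟2 * (1 - (e - star e))) =
        ⅟2 * ⅟2 * (e + star e - 1) ^ 2 := by
      rw [(hhalf _).symm.mul_mul_mul_comm]
      congr 1
      have hse := he.star.eq
      simp only [pow_two, add_mul, sub_mul, mul_add, mul_sub, he.eq, hse, one_mul, mul_one]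
      abel
    rw [hsub, hsq]
    exact ((hhalf _).mul_left (hhalf _)).isNilpotent_mul_left
      ((isNilpotent_add_star_sub_one hA he he0 he1).pow_of_pos two_ne_zero)

theorem eq_zero_or_eq_one_of_isSelfAdjoint {e : A} (he : IsIdempotentElem e)
    (hself : IsSelfAdjoint e) : e = 0 ∨ e = 1 :=
  (hA e hself).imp he.eq_zero_of_isNilpotent fun hreg => hreg (he.eq.trans (mul_one e).symm)

theorem eq_zero_or_eq_of_star_eq_one_sub {d f : A} (hd : IsIdempotentElem d)
    (hstar : star d = 1 - d) (hf : IsIdempotentElem f) (hdf : d * f = f) (hfd : f * d = f) :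
    f = 0 ∨ f = d := by
  have hsd : star f * d = 0 := by
    rw [← hdf, star_mul, hstar, mul_assoc, sub_mul, one_mul, hd.eq, sub_self, mul_zero]
  have hds : d * star f = 0 := by
    rw [← hfd, star_mul, hstar, ← mul_assoc, mul_sub, mul_one, hd.eq, sub_self, zero_mul]
  have hsf : star f * f = 0 := by
    calc star f * f = star f * d * f := by rw [mul_assoc, hdf]
      _ = 0 := by rw [hsd, zero_mul]
  have hfs : f * star f = 0 := by
    calc f * star f = f * (d * star f) := by rw [← mul_assoc, hfd]
      _ = 0 := by rw [hds, mul_zero]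
  have hidem : IsIdempotentElem (f + star f) := by
    rw [IsIdempotentElem, add_mul, mul_add, mul_add, hf.eq, hf.star.eq, hsf, hfs,
      add_zero, zero_add]
  have hd_sum : d * (f + star f) = f := by rw [mul_add, hdf, hds, add_zero]
  exact (eq_zero_or_eq_one_of_isSelfAdjoint hA hidem (.add_star_self f)).imp
    (fun h => by rw [← hd_sum, h, mul_zero]) fun h => by rw [← hd_sum, h, mul_one]

end Dichotomy

end StarRing

section LinearRep

variable {k V W P : Type*} [Field k] [AddCommGroup V] [Module k V] [AddCommGroup W] [Module k W]

/-- The linear representation `φ` is indecomposable. The zero space counts as indecomposable. -/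
def IsIndecomposableRep (φ : P → Submodule k V) : Prop :=
  ∀ U U' : Submodule k V, IsCompl U U' →
    (∀ p, φ p = (φ p ⊓ U) ⊔ (φ p ⊓ U')) → U = ⊥ ∨ U' = ⊥

/-- The endomorphism algebra of the linear representation `φ`: the endomorphisms of `V` mapping
each `φ p` into itself. -/
def repEnd (φ : P → Submodule k V) : Subalgebra k (Module.End k V) where
  carrier := {f | ∀ p, ∀ v ∈ φ p, f v ∈ φ p}
  mul_mem' hf hg p v hv := hf p _ (hg p v hv)
  add_mem' hf hg p v hv := add_mem (hf p v hv) (hg p v hv)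
  algebraMap_mem' r p _ hv := (φ p).smul_mem r hv

theorem projection_mem_repEnd {φ : P → Submodule k V} {U U' : Submodule k V} (hU : IsCompl U U')
    (hφ : ∀ p, φ p = (φ p ⊓ U) ⊔ (φ p ⊓ U')) : U.projection U' hU ∈ repEnd φ := by
  intro p v hv
  rw [hφ p] at hv
  obtain ⟨a, ha, b, hb, rfl⟩ := Submodule.mem_sup.mp hv
  rw [map_add, Submodule.projection_apply_of_mem_left hU ha.2,
    Submodule.projection_apply_of_mem_right hU hb.2, add_zero]
  exact ha.1

theorem isIndecomposableRep_of_isIdempotentElem {φ : P → Submodule k V}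
    (h : ∀ e ∈ repEnd φ, IsIdempotentElem e → e = 0 ∨ e = 1) : IsIndecomposableRep φ := by
  intro U U' hU hφ
  refine (h _ (projection_mem_repEnd hU hφ) (Submodule.isIdempotentElem_projection hU)).imp
    (fun h0 => ?_) fun h1 => ?_
  · rw [← Submodule.range_projection hU, h0, LinearMap.range_zero]
  · rw [← Submodule.ker_projection hU, h1, Module.End.one_eq_id, LinearMap.ker_id]

theorem eq_inf_range_sup_inf_ker [FiniteDimensional k V] {g : Module.End k V}
    (hg : Disjoint (LinearMap.range g) (LinearMap.ker g)) {N : Submodule k V}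
    (hN : ∀ v ∈ N, g v ∈ N) : N = (N ⊓ LinearMap.range g) ⊔ (N ⊓ LinearMap.ker g) := by
  have hcomap : (N ⊓ LinearMap.range g).comap g = (N ⊓ LinearMap.range g) ⊔ LinearMap.ker g :=
    LinearMap.comap_eq_sup_ker_of_disjoint (fun v hv => ⟨hN v hv.1, v, rfl⟩)
      (hg.mono_left inf_le_right)
  have hle : N ≤ (N ⊓ LinearMap.range g).comap g := fun v hv => ⟨hN v hv, v, rfl⟩
  rw [inf_comm N (LinearMap.ker g), ← sup_inf_assoc_of_le _ inf_le_left, ← hcomap,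
    inf_eq_right.mpr hle]

theorem isIndecomposableRep_comap {φ : P → Submodule k V} {i : W →ₗ[k] V} {r : V →ₗ[k] W}
    (hri : r ∘ₗ i = LinearMap.id) (hd : i ∘ₗ r ∈ repEnd φ)
    (h : ∀ f ∈ repEnd φ, IsIdempotentElem f → i ∘ₗ r ∘ₗ f = f → f ∘ₗ i ∘ₗ r = f →
      f = 0 ∨ f = i ∘ₗ r) :
    IsIndecomposableRep fun p => (φ p).comap i := by
  have hri' (x : W) : r (i x) = x := LinearMap.congr_fun hri x
  refine isIndecomposableRep_of_isIdempotentElem fun e he hidem => ?_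
  have heq : e = r ∘ₗ (i ∘ₗ e ∘ₗ r) ∘ₗ i := LinearMap.ext fun x => by simp [hri']
  refine (h (i ∘ₗ e ∘ₗ r) (fun p v hv => he p (r v) (hd p v hv)) (LinearMap.ext fun v => ?_)
    (LinearMap.ext fun v => ?_) (LinearMap.ext fun v => ?_)).imp (fun h0 => ?_) fun h1 => ?_
  · simpa [hri'] using congrArg i (LinearMap.congr_fun hidem.eq (r v))
  · simp [hri']
  · simp [hri']
  · rw [heq, h0, LinearMap.zero_comp, LinearMap.comp_zero]
  · rw [heq, h1]
    exact LinearMap.ext fun x => by simp [hri']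

theorem exists_comp_eq_id_and_comp_eq_of_isIdempotentElem [FiniteDimensional k V]
    {e : Module.End k V} (he : IsIdempotentElem e) :
    ∃ (n : ℕ) (i : (Fin n → k) →ₗ[k] V) (r : V →ₗ[k] Fin n → k),
      r ∘ₗ i = LinearMap.id ∧ i ∘ₗ r = e := by
  let b := (Module.finBasis k (LinearMap.range e)).equivFun
  refine ⟨_, (LinearMap.range e).subtype ∘ₗ b.symm.toLinearMap,
    b.toLinearMap ∘ₗ e.rangeRestrict, LinearMap.ext fun x => ?_, LinearMap.ext fun v => ?_⟩
  · have hfix : e.rangeRestrict (b.symm x) = b.symm x :=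
      Subtype.ext (LinearMap.IsIdempotentElem.mem_range_iff he |>.mp (b.symm x).2)
    simp [hfix]
  · simp

end LinearRep

/-- A family of subspaces `φ p` of a symplectic space `(V, ω)` with `φ (invol p) = (φ p)^⊥`. No
order on `P` is recorded: for an ordered `P`, a symplectic representation of `(P, invol)` is such a
family that is moreover monotone. -/
structure SymplecticRep (k V : Type*) [Field k] [AddCommGroup V] [Module k V] {P : Type*}
    (invol : P → P) where
  involutive : Function.Involutive invol
  ω : LinearMap.BilinForm k V
  isAlt : LinearMap.IsAlt ω
  nondegenerate : ω.Nondegenerate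
  φ : P → Submodule k V
  apply_invol : ∀ p, φ (invol p) = LinearMap.BilinForm.orthogonal ω.flip (φ p)

/-- The symplectification `ψ⁻` of the linear representation `ψ`, on `W* × W`. -/
def symplectification {k W P : Type*} [Field k] [AddCommGroup W] [Module k W] (invol : P → P)
    (ψ : P → Submodule k W) (p : P) : Submodule k (Module.Dual k W × W) :=
  (ψ (invol p)).dualAnnihilator.prod (ψ p)

namespace SymplecticRep

variable {k V W P : Type*} [Field k] [AddCommGroup V] [Module k V] [AddCommGroup W] [Module k W]
  {invol : P → P} (ρ : SymplecticRep k V invol)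

/-- Indecomposability with respect to orthogonal decompositions. -/
def IsIndecomposable : Prop :=
  ∀ U U' : Submodule k V, U' = LinearMap.BilinForm.orthogonal ρ.ω.flip U → IsCompl U U' →
    (∀ p, ρ.φ p = (ρ.φ p ⊓ U) ⊔ (ρ.φ p ⊓ U')) → U = ⊥ ∨ U' = ⊥

theorem mem_iff (p : P) (v : V) : v ∈ ρ.φ p ↔ ∀ w ∈ ρ.φ (invol p), ρ.ω v w = 0 := by
  conv_lhs => rw [← ρ.involutive p, ρ.apply_invol, LinearMap.BilinForm.mem_orthogonal_iff]
  rfl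

section Adjoint

variable [FiniteDimensional k V]

theorem leftAdjoint_apply (f : Module.End k V) (v w : V) :
    ρ.ω (ρ.ω.leftAdjointOfNondegenerate ρ.nondegenerate f v) w = ρ.ω v (f w) :=
  ρ.ω.isAdjointPairLeftAdjointOfNondegenerate ρ.nondegenerate f v w

theorem leftAdjoint_eq {f g : Module.End k V} (h : ∀ v w, ρ.ω (g v) w = ρ.ω v (f w)) :
    ρ.ω.leftAdjointOfNondegenerate ρ.nondegenerate f = g :=
  ((ρ.ω.isAdjointPair_iff_eq_of_nondegenerate ρ.nondegenerate g f).mp h).symm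

theorem leftAdjoint_mem_repEnd {f : Module.End k V} (hf : f ∈ repEnd ρ.φ) :
    ρ.ω.leftAdjointOfNondegenerate ρ.nondegenerate f ∈ repEnd ρ.φ := by
  intro p v hv
  rw [mem_iff] at hv ⊢
  intro w hw
  rw [leftAdjoint_apply]
  exact hv _ (hf _ w hw)

noncomputable instance : StarRing (repEnd ρ.φ) where
  star f := ⟨_, ρ.leftAdjoint_mem_repEnd f.2⟩
  star_involutive f := Subtype.ext <| ρ.leftAdjoint_eq fun v w => by
    change ρ.ω (f.1 v) w = ρ.ω v (ρ.ω.leftAdjointOfNondegenerate ρ.nondegenerate f.1 w)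
    rw [← ρ.isAlt.neg, ← leftAdjoint_apply, ρ.isAlt.neg]
  star_mul f g := Subtype.ext <| ρ.leftAdjoint_eq fun v w => by
    simp only [Module.End.mul_apply, leftAdjoint_apply, MulMemClass.coe_mul]
  star_add f g := Subtype.ext <| ρ.leftAdjoint_eq fun v w => by
    simp only [LinearMap.add_apply, map_add, leftAdjoint_apply, AddMemClass.coe_add]

theorem star_apply (f : repEnd ρ.φ) (v w : V) : ρ.ω ((star f).1 v) w = ρ.ω v (f.1 w) :=
  ρ.leftAdjoint_apply f v w

theorem ker_star (f : repEnd ρ.φ) :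
    LinearMap.ker (star f).1 =
      LinearMap.BilinForm.orthogonal ρ.ω.flip (LinearMap.range f.1) := by
  ext v
  rw [LinearMap.mem_ker, LinearMap.BilinForm.mem_orthogonal_iff]
  constructor
  · rintro hv _ ⟨w, rfl⟩
    change ρ.ω v (f.1 w) = 0
    rw [← star_apply, hv, map_zero, LinearMap.zero_apply]
  · intro hv
    refine ρ.nondegenerate.1 _ fun w => ?_
    rw [star_apply]
    exact hv _ ⟨w, rfl⟩

variable {ρ}

theorem IsIndecomposable.isNilpotent_or_isLeftRegular (hρ : ρ.IsIndecomposable)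
    (f : repEnd ρ.φ) (hf : IsSelfAdjoint f) : IsNilpotent f ∨ IsLeftRegular f := by
  obtain ⟨n, hn, hn1⟩ := (f.1.eventually_isCompl_ker_pow_range_pow.and
    (Filter.eventually_ge_atTop 1)).exists
  have horth := ρ.ker_star (f ^ n)
  rw [(hf.pow n).star_eq] at horth
  rcases hρ _ _ horth hn.symm
    fun p => eq_inf_range_sup_inf_ker hn.symm.disjoint ((f ^ n).2 p) with hrange | hker
  · exact .inl ⟨n, Subtype.ext (LinearMap.range_eq_bot.mp hrange)⟩
  · refine .inr ((IsLeftRegular.pow_iff hn1).mp fun a b hab => ?_)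
    refine Subtype.ext (LinearMap.ext fun v => ?_)
    exact LinearMap.ker_eq_bot.mp hker (LinearMap.congr_fun (congrArg Subtype.val hab) v)

theorem apply_add_apply_of_star_eq_one_sub {d : repEnd ρ.φ} (hd : star d = 1 - d) (v w : V) :
    ρ.ω (d.1 v) w + ρ.ω v (d.1 w) = ρ.ω v w := by
  rw [← star_apply, hd, ← LinearMap.add_apply, ← map_add]
  simp

end Adjoint

section Symplectification

variable (i : W →ₗ[k] V) (r : V →ₗ[k] W)

/-- The map `V → W* × W` whose first component is `v ↦ ω(v, i ·)` and whose second is `r`: the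
comparison with the symplectification when `i ∘ r` projects onto a Lagrangian subspace along
another. -/
def toDualProd : V →ₗ[k] Module.Dual k W × W :=
  (ρ.ω.compl₂ i).prod r

variable {i r}
variable (hω : ∀ v w, ρ.ω (i (r v)) w + ρ.ω v (i (r w)) = ρ.ω v w)
include hω

theorem OmegaForm_toDualProd (v w : V) :
    OmegaForm k W (ρ.toDualProd i r v) (ρ.toDualProd i r w) = ρ.ω v w := by
  change ρ.ω v (i (r w)) - ρ.ω w (i (r v)) = ρ.ω v w
  rw [← hω v w, ← ρ.isAlt.neg w, sub_eq_neg_add]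

theorem toDualProd_bijective [FiniteDimensional k V] (hri : r ∘ₗ i = LinearMap.id) :
    Function.Bijective (ρ.toDualProd i r) := by
  have hri' (x : W) : r (i x) = x := LinearMap.congr_fun hri x
  constructor
  · refine (injective_iff_map_eq_zero _).mpr fun v hv => ρ.nondegenerate.1 v fun w => ?_
    rw [← ρ.OmegaForm_toDualProd hω, hv, map_zero, LinearMap.zero_apply]
  · rintro ⟨ξ, x⟩
    have hisotropic (y z : W) : ρ.ω (i y) (i z) = 0 := by
      simpa only [hri', add_eq_left] using hω (i y) (i z)
    let u := (ρ.ω.toDual ρ.nondegenerate).symm (ξ ∘ₗ r)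
    have hu (v : V) : ρ.ω u v = ξ (r v) :=
      LinearMap.BilinForm.apply_toDual_symm_apply (ξ ∘ₗ r) v
    have hiru : i (r u) = 0 := ρ.nondegenerate.1 _ fun w => by
      simpa only [hu, hri', add_eq_right] using hω u w
    have hru : r u = 0 := by rw [← hri' (r u), hiru, map_zero]
    refine ⟨u + i x, Prod.ext (LinearMap.ext fun z => ?_) ?_⟩
    · change ρ.ω (u + i x) (i z) = ξ z
      rw [map_add, LinearMap.add_apply, hisotropic, add_zero, hu, hri']
    · change r (u + i x) = x
      rw [map_add, hru, hri', zero_add]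

theorem comap_toDualProd_symplectification (hd : i ∘ₗ r ∈ repEnd ρ.φ) (p : P) :
    (symplectification invol (fun q => (ρ.φ q).comap i) p).comap (ρ.toDualProd i r) = ρ.φ p := by
  ext v
  change ρ.ω.compl₂ i v ∈ ((ρ.φ (invol p)).comap i).dualAnnihilator ∧ i (r v) ∈ ρ.φ p ↔ _
  rw [Submodule.mem_dualAnnihilator]
  constructor
  · rintro ⟨hann, hmem⟩
    refine (ρ.mem_iff p v).mpr fun w hw => ?_
    rw [← hω, (ρ.mem_iff p _).mp hmem w hw, zero_add]
    exact hann (r w) (hd _ w hw)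
  · exact fun hv => ⟨fun x hx => (ρ.mem_iff p v).mp hv _ hx, hd p v hv⟩

theorem exists_linearEquiv_symplectification [FiniteDimensional k V]
    (hri : r ∘ₗ i = LinearMap.id) (hd : i ∘ₗ r ∈ repEnd ρ.φ) :
    ∃ F : V ≃ₗ[k] Module.Dual k W × W,
      (∀ v w, OmegaForm k W (F v) (F w) = ρ.ω v w) ∧
      ∀ p, (ρ.φ p).map (F : V →ₗ[k] Module.Dual k W × W) =
        symplectification invol (fun q => (ρ.φ q).comap i) p := by
  have hbij := ρ.toDualProd_bijective hω hri
  refine ⟨.ofBijective (ρ.toDualProd i r) hbij, ρ.OmegaForm_toDualProd hω, fun p => ?_⟩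
  change (ρ.φ p).map (ρ.toDualProd i r) = _
  rw [← ρ.comap_toDualProd_symplectification hω hd p]
  exact Submodule.map_comap_eq_of_surjective hbij.surjective _

end Symplectification

variable {ρ} [FiniteDimensional k V]

theorem IsIndecomposable.exists_star_eq_one_sub (hρ : ρ.IsIndecomposable)
    (h2 : (2 : k) ≠ 0) (hdec : ¬ IsIndecomposableRep ρ.φ) :
    ∃ d : repEnd ρ.φ, IsIdempotentElem d ∧ star d = 1 - d := by
  contrapose! hdec
  refine isIndecomposableRep_of_isIdempotentElem fun e he hidem => ?_
  have : Invertible (2 : repEnd ρ.φ) :=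
    ((Ne.isUnit h2).map (algebraMap k (repEnd ρ.φ))).invertible.copy _ (map_ofNat _ 2).symm
  by_contra! hne
  obtain ⟨d, hd, hstar⟩ := exists_isIdempotentElem_star_eq_one_sub
    hρ.isNilpotent_or_isLeftRegular (e := ⟨e, he⟩) (Subtype.ext hidem)
    (fun h => hne.1 (congrArg Subtype.val h)) (fun h => hne.2 (congrArg Subtype.val h))
  exact hdec d hd hstar

theorem IsIndecomposable.isIndecomposableRep_of_star_eq_one_sub (hρ : ρ.IsIndecomposable)
    {d : repEnd ρ.φ} (hd : IsIdempotentElem d) (hstar : star d = 1 - d)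
    {i : W →ₗ[k] V} {r : V →ₗ[k] W}
    (hri : r ∘ₗ i = LinearMap.id) (hir : i ∘ₗ r = d.1) :
    IsIndecomposableRep fun p => (ρ.φ p).comap i := by
  refine isIndecomposableRep_comap hri (hir ▸ d.2) fun f hf hidem hdf hfd => ?_
  rw [hir] at hfd ⊢
  rw [← LinearMap.comp_assoc, hir] at hdf
  exact (eq_zero_or_eq_of_star_eq_one_sub hρ.isNilpotent_or_isLeftRegular hd hstar
    (f := ⟨f, hf⟩) (Subtype.ext hidem) (Subtype.ext hdf) (Subtype.ext hfd)).imp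
    (congrArg Subtype.val) (congrArg Subtype.val)

end SymplecticRep

theorem indecomposable_split_symplectic_rep_is_symplectification_general
    {k V P : Type*} [Field k] [AddCommGroup V] [Module k V] [FiniteDimensional k V]
    (h2 : (2 : k) ≠ 0) {invol : P → P} (ρ : SymplecticRep k V invol)
    (hρ : ρ.IsIndecomposable) (hdec : ¬ IsIndecomposableRep ρ.φ) :
    ∃ (n : ℕ) (i : (Fin n → k) →ₗ[k] V),
      0 < n ∧ IsIndecomposableRep (fun p => (ρ.φ p).comap i) ∧
      ∃ F : V ≃ₗ[k] Module.Dual k (Fin n → k) × (Fin n → k),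
        (∀ v w, OmegaForm k (Fin n → k) (F v) (F w) = ρ.ω v w) ∧
        ∀ p, (ρ.φ p).map (F : V →ₗ[k] Module.Dual k (Fin n → k) × (Fin n → k)) =
          symplectification invol (fun q => (ρ.φ q).comap i) p := by
  obtain ⟨d, hd, hstar⟩ := hρ.exists_star_eq_one_sub h2 hdec
  obtain ⟨n, i, r, hri, hir⟩ :=
    exists_comp_eq_id_and_comp_eq_of_isIdempotentElem (congrArg Subtype.val hd)
  have hω (v w : V) : ρ.ω (i (r v)) w + ρ.ω v (i (r w)) = ρ.ω v w := by
    simpa only [← hir, LinearMap.comp_apply] using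
      SymplecticRep.apply_add_apply_of_star_eq_one_sub hstar v w
  obtain ⟨F, hF⟩ := ρ.exists_linearEquiv_symplectification hω hri (hir ▸ d.2)
  refine ⟨n, i, Nat.pos_of_ne_zero ?_,
    hρ.isIndecomposableRep_of_star_eq_one_sub hd hstar hri hir, F, hF⟩
  rintro rfl
  have := F.toEquiv.subsingleton
  exact hdec fun U _ _ _ => .inl U.eq_bot_of_subsingleton

/-- (Quebbemann–Scharlau–Schulte / Sergeichuk.)  Let `φ` be a
symplectically indecomposable symplectic representation of a poset with order-reversing
involution `(P, ⊥)` in `(V, ω)` over a field of characteristic `≠ 2`, whose underlying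
linear representation is decomposable.  Then there are a finite-dimensional space
`W = Fin n → k` and an indecomposable linear representation `ψ` of `P` in `W` such that
`φ` is isomorphic, as a symplectic representation, to the symplectification `ψ⁻` on
`(W* × W, Ω)`. -/
theorem indecomposable_split_symplectic_rep_is_symplectification
    {k V P : Type*} [Field k] [AddCommGroup V] [Module k V] [FiniteDimensional k V]
    [PartialOrder P] (h2 : (2 : k) ≠ 0)
    (invol : P → P) (hinv : Function.Involutive invol) (hanti : Antitone invol)
    (ω : LinearMap.BilinForm k V) (halt : LinearMap.IsAlt ω)
    (hnd : LinearMap.BilinForm.Nondegenerate ω)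
    (φ : P → Submodule k V) (hmono : Monotone φ)
    (hsymp : ∀ p, φ (invol p) = LinearMap.BilinForm.orthogonal ω.flip (φ p))
    (hsympindec : ∀ U' U'' : Submodule k V,
      U'' = LinearMap.BilinForm.orthogonal ω.flip U' → IsCompl U' U'' →
      (∀ p, φ p = (φ p ⊓ U') ⊔ (φ p ⊓ U'')) → U' = ⊥ ∨ U'' = ⊥)
    (hlindec : ∃ U' U'' : Submodule k V, U' ≠ ⊥ ∧ U'' ≠ ⊥ ∧ IsCompl U' U'' ∧
      ∀ p, φ p = (φ p ⊓ U') ⊔ (φ p ⊓ U'')) :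
    ∃ (n : ℕ) (ψ : P → Submodule k (Fin n → k)),
      0 < n ∧ Monotone ψ ∧
      (∀ U' U'' : Submodule k (Fin n → k), IsCompl U' U'' →
        (∀ p, ψ p = (ψ p ⊓ U') ⊔ (ψ p ⊓ U'')) → U' = ⊥ ∨ U'' = ⊥) ∧
      ∃ F : V ≃ₗ[k] (Module.Dual k (Fin n → k) × (Fin n → k)),
        (∀ a b : V, OmegaForm k (Fin n → k) (F a) (F b) = ω a b) ∧
        ∀ p, (φ p).map (F : V →ₗ[k] (Module.Dual k (Fin n → k) × (Fin n → k))) =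
          (ψ (invol p)).dualAnnihilator.prod (ψ p) := by
  obtain ⟨n, i, hn, hi, hF⟩ := indecomposable_split_symplectic_rep_is_symplectification_general h2
    ⟨hinv, ω, halt, hnd, φ, hsymp⟩ hsympindec fun h =>
      let ⟨U', U'', hU', hU'', hcompl, hφ⟩ := hlindec
      (h U' U'' hcompl hφ).elim hU' hU''
  exact ⟨n, fun p => (φ p).comap i, hn, fun _ _ h => Submodule.comap_mono (hmono h), hi, hF⟩
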